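/- Let f : ℝⁿ → ℝⁿ be continuously differentiable, let M be a symmetric positive definite real n×n matrix with M ≼ I, let β > 0, ℓ > 0, ρ_max ≥ 0, and let ω : ℝ → ℝⁿ satisfy ‖ω(t)‖ ≤ ρ_max for all t ≥ 0. Let x, x̄ : [0,∞) → ℝⁿ be differentiable with x′(t) = f(x(t)) + ω(t), x̄′(t) = f(x̄(t)), and x(0) = x̄(0). Assume that for all t ≥ 0, ‖x(t) − x̄(t)‖_M ≤ ℓ and (Df(v))ᵀ M + M (Df(v)) ≼ −2βM for every v on the segment joining x(t) and x̄(t). Then the deviation is uniformly ultimately bounded: ‖x(t) − x̄(t)‖²_M ≤ 2 ℓ ρ_max / β for all t ≥ 0. -/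

import Mathlib

open Matrix

/-- The M-norm of a vector: `‖v‖_M = √(vᵀ M v)`. -/
noncomputable def mnorm {n : ℕ} (M : Matrix (Fin n) (Fin n) ℝ) (v : Fin n → ℝ) : ℝ :=
  Real.sqrt (v ⬝ᵥ M.mulVec v)

/-- The Jacobian of `f` at `z`, as a matrix. -/
noncomputable def jac {n : ℕ} (f : (Fin n → ℝ) → (Fin n → ℝ)) (z : Fin n → ℝ) :
    Matrix (Fin n) (Fin n) ℝ :=
  LinearMap.toMatrix' (fderiv ℝ f z : (Fin n → ℝ) →ₗ[ℝ] (Fin n → ℝ))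

/-- Loewner order: `A ≼ B` iff `B - A` is positive semidefinite. -/
def loewnerLE {n : ℕ} (A B : Matrix (Fin n) (Fin n) ℝ) : Prop := (B - A).PosSemidef

theorem hasDerivAt_dot {n : ℕ} {u v : ℝ → Fin n → ℝ} {u' v' : Fin n → ℝ} {t : ℝ}
    (hu : HasDerivAt u u' t) (hv : HasDerivAt v v' t) :
    HasDerivAt (fun s => u s ⬝ᵥ v s) (u' ⬝ᵥ v t + u t ⬝ᵥ v') t := by
  have h := HasDerivAt.fun_sum (u := Finset.univ) (fun i _ =>
    ((hasDerivAt_pi.1 hu) i).mul ((hasDerivAt_pi.1 hv) i))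
  simp only [dotProduct, ← Finset.sum_add_distrib]
  exact h

theorem hasDerivAt_mulVec {n : ℕ} (M : Matrix (Fin n) (Fin n) ℝ) {v : ℝ → Fin n → ℝ}
    {v' : Fin n → ℝ} {t : ℝ} (hv : HasDerivAt v v' t) :
    HasDerivAt (fun s => M *ᵥ v s) (M *ᵥ v') t :=
  (LinearMap.toContinuousLinearMap (Matrix.mulVecLin M)).hasFDerivAt.comp_hasDerivAt t hv

theorem dot_symm {n : ℕ} {M : Matrix (Fin n) (Fin n) ℝ} (hM : M.IsSymm) (u v : Fin n → ℝ) :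
    u ⬝ᵥ M *ᵥ v = v ⬝ᵥ M *ᵥ u := by
  rw [dotProduct_mulVec, ← mulVec_transpose, hM.eq, dotProduct_comm]

theorem psd_nonneg {n : ℕ} {M : Matrix (Fin n) (Fin n) ℝ} (hM : M.PosSemidef) (u : Fin n → ℝ) :
    0 ≤ u ⬝ᵥ M *ᵥ u := by
  simpa using hM.dotProduct_mulVec_nonneg u

theorem cs_bound {n : ℕ} {M : Matrix (Fin n) (Fin n) ℝ} (hs : M.IsSymm) (hM : M.PosSemidef)
    (u v : Fin n → ℝ) : (u ⬝ᵥ M *ᵥ v) ^ 2 ≤ (u ⬝ᵥ M *ᵥ u) * (v ⬝ᵥ M *ᵥ v) := by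
  have h := discrim_le_zero (a := v ⬝ᵥ M *ᵥ v) (b := 2 * (u ⬝ᵥ M *ᵥ v)) (c := u ⬝ᵥ M *ᵥ u)
    (fun s => by
      have h := psd_nonneg hM (u + s • v)
      simp only [mulVec_add, mulVec_smul, dotProduct_add, add_dotProduct, dotProduct_smul,
        smul_dotProduct, smul_eq_mul, dot_symm hs v u] at h
      linarith)
  unfold discrim at h
  linarith

theorem contract_bound {n : ℕ} (f : (Fin n → ℝ) → (Fin n → ℝ)) (hf : ContDiff ℝ 1 f)
    (M : Matrix (Fin n) (Fin n) ℝ) (hs : M.IsSymm) (β : ℝ) (a b : Fin n → ℝ)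
    (hc : ∀ v ∈ segment ℝ a b,
      loewnerLE ((jac f v)ᵀ * M + M * jac f v) ((-(2 * β)) • M)) :
    (a - b) ⬝ᵥ M *ᵥ (f a - f b) ≤ -β * ((a - b) ⬝ᵥ M *ᵥ (a - b)) := by
  set e := a - b with he
  have hd : ∀ s : ℝ, HasDerivAt (fun s : ℝ => e ⬝ᵥ M *ᵥ f (b + s • e))
      (e ⬝ᵥ M *ᵥ (jac f (b + s • e) *ᵥ e)) s := by
    intro s
    have h1 : HasDerivAt (fun s : ℝ => b + s • e) e s := by
      simpa using ((hasDerivAt_id s).smul_const e).const_add b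
    have h2 := ((hf.differentiable one_ne_zero) (b + s • e)).hasFDerivAt.comp_hasDerivAt s h1
    have h3 := hasDerivAt_dot (hasDerivAt_const s e) (hasDerivAt_mulVec M h2)
    have h4 : jac f (b + s • e) *ᵥ e = fderiv ℝ f (b + s • e) e := by
      unfold jac
      rw [LinearMap.toMatrix'_mulVec]
      rfl
    rw [h4]
    simpa using h3
  obtain ⟨c, hc1, hc2⟩ := exists_hasDerivAt_eq_slope _ _ (zero_lt_one (α := ℝ))
    (fun s _ => (hd s).continuousAt.continuousWithinAt) (fun s _ => hd s)
  have hseg : b + c • e ∈ segment ℝ a b := by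
    refine ⟨c, 1 - c, hc1.1.le, by linarith [hc1.2], by ring, ?_⟩
    rw [he]; module
  have hp := psd_nonneg (hc _ hseg) e
  simp only [sub_mulVec, add_mulVec, smul_mulVec, dotProduct_sub, dotProduct_add,
    dotProduct_smul, smul_eq_mul, ← mulVec_mulVec] at hp
  have h5 : e ⬝ᵥ (jac f (b + c • e))ᵀ *ᵥ (M *ᵥ e) = e ⬝ᵥ M *ᵥ (jac f (b + c • e) *ᵥ e) := by
    rw [dot_symm hs e, dotProduct_mulVec, vecMul_transpose]
  have h6 : b + (1:ℝ) • e = a := by rw [he]; module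
  rw [h5] at hp
  rw [hc2] at hp
  simp only [h6, zero_smul, add_zero, sub_zero, div_one] at hp
  rw [mulVec_sub, dotProduct_sub]
  linarith

theorem stmt9 {n : ℕ} (f : (Fin n → ℝ) → (Fin n → ℝ)) (hf : ContDiff ℝ 1 f)
    (M : Matrix (Fin n) (Fin n) ℝ) (hMsymm : M.IsSymm) (hMpd : M.PosDef)
    (hMle : loewnerLE M (1 : Matrix (Fin n) (Fin n) ℝ))
    (β ℓ ρmax : ℝ) (hβ : 0 < β) (hℓ : 0 < ℓ) (hρ : 0 ≤ ρmax)
    (ω : ℝ → Fin n → ℝ)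
    (hω : ∀ t : ℝ, 0 ≤ t → Real.sqrt (ω t ⬝ᵥ ω t) ≤ ρmax)
    (x xbar : ℝ → Fin n → ℝ)
    (hx : ∀ t : ℝ, 0 ≤ t → HasDerivAt x (f (x t) + ω t) t)
    (hxbar : ∀ t : ℝ, 0 ≤ t → HasDerivAt xbar (f (xbar t)) t)
    (hinit : x 0 = xbar 0)
    (htube : ∀ t : ℝ, 0 ≤ t → mnorm M (x t - xbar t) ≤ ℓ)
    (hcontract : ∀ t : ℝ, 0 ≤ t → ∀ v ∈ segment ℝ (x t) (xbar t),
      loewnerLE ((jac f v)ᵀ * M + M * jac f v) ((-(2 * β)) • M)) :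
    ∀ t : ℝ, 0 ≤ t →
      (mnorm M (x t - xbar t)) ^ 2 ≤ 2 * ℓ * ρmax / β := by
  have hpsd := hMpd.posSemidef
  have hVn : ∀ t, 0 ≤ (x t - xbar t) ⬝ᵥ M *ᵥ (x t - xbar t) := fun t => psd_nonneg hpsd _
  have hV : ∀ t, (mnorm M (x t - xbar t)) ^ 2 = (x t - xbar t) ⬝ᵥ M *ᵥ (x t - xbar t) :=
    fun t => Real.sq_sqrt (hVn t)
  set h : ℝ → ℝ := fun t => Real.exp (2 * β * t) *
    ((x t - xbar t) ⬝ᵥ M *ᵥ (x t - xbar t) - ℓ * ρmax / β) with hh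
  have hder : ∀ t, 0 ≤ t → ∃ d, HasDerivAt h d t ∧ d ≤ 0 := by
    intro t ht
    have he := (hx t ht).sub (hxbar t ht)
    have h1 := hasDerivAt_dot he (hasDerivAt_mulVec M he)
    have h2 : HasDerivAt (fun t => Real.exp (2 * β * t)) (Real.exp (2 * β * t) * (2 * β)) t := by
      simpa using ((hasDerivAt_id t).const_mul (2 * β)).exp
    refine ⟨_, h2.mul (h1.sub_const (ℓ * ρmax / β)), ?_⟩
    have h3 := contract_bound f hf M hMsymm β _ _ (hcontract t ht)
    have h4 := cs_bound hMsymm hpsd (x t - xbar t) (ω t)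
    have h5 := psd_nonneg hMle (ω t)
    rw [sub_mulVec, dotProduct_sub, one_mulVec] at h5
    have h6 : ω t ⬝ᵥ ω t ≤ ρmax ^ 2 := (Real.sqrt_le_left hρ).1 (hω t ht)
    have h7 : (x t - xbar t) ⬝ᵥ M *ᵥ (x t - xbar t) ≤ ℓ ^ 2 :=
      (Real.sqrt_le_left hℓ.le).1 (htube t ht)
    have h8 : ((x t - xbar t) ⬝ᵥ M *ᵥ ω t) ^ 2 ≤ (ℓ * ρmax) ^ 2 := by
      rw [mul_pow]
      exact h4.trans (mul_le_mul h7 (by linarith) (psd_nonneg hpsd _) (by positivity))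
    have h9 := abs_le_of_sq_le_sq' h8 (by positivity)
    have h10 : f (x t) + ω t - f (xbar t) = (f (x t) - f (xbar t)) + ω t := by abel
    simp only [Pi.sub_apply]
    rw [dot_symm hMsymm (f (x t) + ω t - f (xbar t)), h10, mulVec_add, dotProduct_add]
    have h11 : β * (ℓ * ρmax / β) = ℓ * ρmax := by field_simp
    have hE := Real.exp_pos (2 * β * t)
    generalize (x t - xbar t) ⬝ᵥ M *ᵥ (x t - xbar t) = V at *
    generalize (x t - xbar t) ⬝ᵥ M *ᵥ (f (x t) - f (xbar t)) = F at *
    generalize (x t - xbar t) ⬝ᵥ M *ᵥ ω t = W at *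
    have h12 : 2 * β * (V - ℓ * ρmax / β) + (F + W + (F + W)) ≤ 0 := by linarith [h9.2]
    have := mul_nonpos_of_nonneg_of_nonpos hE.le h12
    linarith
  have hanti : AntitoneOn h (Set.Ici 0) := by
    refine antitoneOn_of_deriv_nonpos (convex_Ici 0) ?_ ?_ ?_
    · intro t ht
      obtain ⟨d, hd, _⟩ := hder t ht
      exact hd.continuousAt.continuousWithinAt
    · intro t ht
      rw [interior_Ici] at ht
      obtain ⟨d, hd, _⟩ := hder t (le_of_lt ht)
      exact hd.differentiableAt.differentiableWithinAt
    · intro t ht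
      rw [interior_Ici] at ht
      obtain ⟨d, hd, hd0⟩ := hder t (le_of_lt ht)
      rw [hd.deriv]
      exact hd0
  intro t ht
  have hq : 0 ≤ ℓ * ρmax / β := by positivity
  have h0 : h t ≤ h 0 := hanti Set.self_mem_Ici ht ht
  have h00 : h 0 ≤ 0 := by simp [hh, hinit, hq]
  have h1 := nonpos_of_mul_nonpos_right (h0.trans h00) (Real.exp_pos _)
  rw [hV]
  have h2 : 2 * ℓ * ρmax / β = 2 * (ℓ * ρmax / β) := by ring
  linarith
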